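/- For every real δ > -3/2 and every complex z, the integral ∫₀¹ sin^{2δ+2}(πx) e^{z x} dx equals Γ(2δ+3) e^{z/2} / (4^{δ+1} Γ(δ+2+iz/(2π)) Γ(δ+2−iz/(2π))). -/

import Mathlib

open Real Complex MeasureTheory intervalIntegral

noncomputable def PTf (a : ℝ) (z : ℂ) (x : ℝ) : ℂ :=
  (((Real.sin (Real.pi * x)) ^ a : ℝ) : ℂ) * Complex.exp (z * x)

lemma PT_sin_pos {x : ℝ} (h0 : 0 < x) (h1 : x < 1) : 0 < Real.sin (Real.pi * x) := by
  apply Real.sin_pos_of_pos_of_lt_pi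
  · positivity
  · nlinarith [Real.pi_pos]

lemma PT_sin_int {a : ℝ} (ha : -1 < a) :
    IntervalIntegrable (fun x : ℝ => (Real.sin (Real.pi * x)) ^ a) volume 0 1 := by
  have h1 : IntervalIntegrable (fun x : ℝ => x ^ a) volume 0 1 := intervalIntegrable_rpow' ha
  have h2 : IntervalIntegrable (fun x : ℝ => (1 - x) ^ a) volume 0 1 := by
    have := (h1.comp_sub_left 1).symm
    simpa using this
  rcases le_or_gt 0 a with h | h
  · apply Continuous.intervalIntegrable
    exact (by fun_prop : Continuous fun x : ℝ => Real.sin (Real.pi * x)).rpow_const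
      (fun x => Or.inr h)
  · refine (h1.add h2).mono_fun' ?_ ?_
    · apply Measurable.aestronglyMeasurable
      fun_prop
    · rw [Set.uIoc_of_le zero_le_one, ← restrict_Ioo_eq_restrict_Ioc]
      refine (ae_restrict_iff' measurableSet_Ioo).2 (Filter.Eventually.of_forall ?_)
      rintro x ⟨hx0, hx1⟩
      have hs := PT_sin_pos hx0 hx1
      have hsa : 0 ≤ Real.sin (Real.pi * x) ^ a := by positivity
      change ‖Real.sin (Real.pi * x) ^ a‖ ≤ x ^ a + (1 - x) ^ a
      rw [Real.norm_of_nonneg hsa]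
      have hx1' : 0 < 1 - x := by linarith
      have p1 : 0 < x ^ a := by positivity
      have p2 : 0 < (1 - x) ^ a := by positivity
      rcases le_or_gt x (1/2) with hx | hx
      · have := Real.mul_le_sin (x := Real.pi * x) (by positivity) (by nlinarith [Real.pi_pos])
        have e : 2 / Real.pi * (Real.pi * x) = 2 * x := by field_simp
        have := Real.rpow_le_rpow_of_nonpos hx0 (show x ≤ Real.sin (Real.pi * x) by linarith) h.le
        linarith
      · have := Real.mul_le_sin (x := Real.pi * (1 - x)) (by positivity) (by nlinarith [Real.pi_pos])
        have e : 2 / Real.pi * (Real.pi * (1 - x)) = 2 * (1 - x) := by field_simp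
        have e2 : Real.sin (Real.pi * (1 - x)) = Real.sin (Real.pi * x) := by
          rw [mul_sub, mul_one, Real.sin_pi_sub]
        have := Real.rpow_le_rpow_of_nonpos hx1' (show 1 - x ≤ Real.sin (Real.pi * x) by linarith) h.le
        linarith

lemma PT_int {a : ℝ} (ha : -1 < a) (z : ℂ) : IntervalIntegrable (PTf a z) volume 0 1 := by
  have h : IntervalIntegrable (fun x : ℝ => (((Real.sin (Real.pi * x)) ^ a : ℝ) : ℂ)) volume 0 1 :=
    ⟨(PT_sin_int ha).1.ofReal, (PT_sin_int ha).2.ofReal⟩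
  exact h.mul_continuousOn (by fun_prop)

noncomputable def PTJ (a : ℝ) (z : ℂ) : ℂ := ∫ x in (0:ℝ)..1, PTf a z x

lemma PT_rec {a : ℝ} (ha : -1 < a) (z : ℂ) :
    ((a:ℂ)+2) * (a+1) * PTJ a z = (((a:ℂ)+2)^2 + (z/Real.pi)^2) * PTJ (a+2) z := by
  have hpi : (Real.pi:ℂ) ≠ 0 := by exact_mod_cast Real.pi_ne_zero
  have hi1 := PT_int ha z
  have hi2 := PT_int (show -1 < a + 2 by linarith) z
  let F : ℝ → ℂ := fun x =>
    (((a+2) * Real.pi * ((Real.sin (Real.pi * x)) ^ (a+1) * Real.cos (Real.pi * x)) : ℝ) : ℂ)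
      * Complex.exp (z * x)
    - z * ((((Real.sin (Real.pi * x)) ^ (a+2) : ℝ) : ℂ) * Complex.exp (z * x))
  have key := integral_eq_sub_of_hasDerivAt_of_le (f := F)
    (f' := fun x => (Real.pi:ℂ)^2 * (((a:ℂ)+2) * (a+1)) * PTf a z x
      - (Real.pi:ℂ)^2 * (((a:ℂ)+2)^2 + (z/Real.pi)^2) * PTf (a+2) z x)
    (zero_le_one (α := ℝ)) ?_ ?_ ((hi1.const_mul _).sub (hi2.const_mul _))
  · rw [intervalIntegral.integral_sub (hi1.const_mul _) (hi2.const_mul _),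
      intervalIntegral.integral_const_mul, intervalIntegral.integral_const_mul] at key
    have hF0 : F 0 = 0 := by
      simp [F, Real.zero_rpow (show a + 1 ≠ 0 by linarith), Real.zero_rpow (show a + 2 ≠ 0 by linarith)]
    have hF1 : F 1 = 0 := by
      simp [F, Real.zero_rpow (show a + 1 ≠ 0 by linarith), Real.zero_rpow (show a + 2 ≠ 0 by linarith)]
    rw [hF0, hF1] at key
    have h2 : (Real.pi:ℂ)^2 ≠ 0 := pow_ne_zero _ hpi
    apply mul_left_cancel₀ h2
    unfold PTJ
    linear_combination key
  · have c1 : Continuous fun x : ℝ => (Real.sin (Real.pi * x)) ^ (a+1) :=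
      (by fun_prop : Continuous fun x : ℝ => Real.sin (Real.pi * x)).rpow_const
        (fun x => Or.inr (by linarith))
    have c2 : Continuous fun x : ℝ => (Real.sin (Real.pi * x)) ^ (a+2) :=
      (by fun_prop : Continuous fun x : ℝ => Real.sin (Real.pi * x)).rpow_const
        (fun x => Or.inr (by linarith))
    apply Continuous.continuousOn
    fun_prop
  · rintro x ⟨hx0, hx1⟩
    have hs := PT_sin_pos hx0 hx1
    have dl : HasDerivAt (fun x : ℝ => Real.pi * x) Real.pi x := by
      simpa using (hasDerivAt_id x).const_mul Real.pi
    have ds := dl.sin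
    have dc := dl.cos
    have d1 := (((ds.rpow_const (p := a+1) (Or.inl hs.ne')).mul dc).const_mul
      ((a+2) * Real.pi)).ofReal_comp
    have d2 := (ds.rpow_const (p := a+2) (Or.inl hs.ne')).ofReal_comp
    have de : HasDerivAt (fun x : ℝ => Complex.exp (z * x)) (Complex.exp (z * x) * z) x := by
      have : HasDerivAt (fun x : ℝ => z * (x:ℂ)) z x := by
        simpa using (hasDerivAt_id x).ofReal_comp.const_mul z
      exact this.cexp
    have := (d1.mul de).sub ((d2.mul de).const_mul z)
    refine this.congr_deriv ?_
    unfold PTf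
    have e1 : Real.sin (Real.pi * x) ^ (a+1) = Real.sin (Real.pi * x) ^ a * Real.sin (Real.pi * x) := by
      rw [Real.rpow_add hs, Real.rpow_one]
    have e2 : Real.sin (Real.pi * x) ^ (a+2) = Real.sin (Real.pi * x) ^ a * Real.sin (Real.pi * x)^2 := by
      rw [Real.rpow_add hs]; norm_cast
    have e3 : a + 1 - 1 = a := by ring
    have e4 : a + 2 - 1 = a + 1 := by ring
    have e5 : ((Real.cos (Real.pi * x) : ℝ):ℂ)^2 = 1 - ((Real.sin (Real.pi * x) : ℝ):ℂ)^2 := by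
      rw [eq_sub_iff_add_eq]; exact_mod_cast Real.cos_sq_add_sin_sq _
    simp only [Pi.mul_apply, e3, e4, e2, e1]
    push_cast at e5 ⊢
    field_simp
    ring_nf
    simp only [e5]
    ring

open Filter Topology in
lemma PT_peak {a : ℝ} (ha : -1 < a) (z : ℂ) :
    Tendsto (fun n : ℕ => PTJ (a + 2 * n) z / PTJ (2 * n) 0) atTop (𝓝 (Complex.exp (z/2))) := by
  have hhalf : Real.sin (Real.pi * (1/2)) = 1 := by
    rw [mul_one_div, Real.sin_pi_div_two]
  have key := tendsto_setIntegral_pow_smul_of_unique_maximum_of_isCompact_of_integrableOn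
    (μ := volume) (s := Set.Icc (0:ℝ) 1) (c := fun x => Real.sin (Real.pi * x) ^ 2)
    (x₀ := 1/2) (g := PTf a z) isCompact_Icc (by fun_prop) ?_ (fun x _ => sq_nonneg _)
    (by rw [hhalf]; norm_num) ?_ ?_ ?_
  · have hg : PTf a z (1/2) = Complex.exp (z/2) := by
      unfold PTf
      rw [hhalf]
      simp
      ring_nf
    rw [hg] at key
    refine key.congr fun n => ?_
    have e1 : PTJ (2 * n) 0 = ((∫ x in Set.Icc (0:ℝ) 1, (Real.sin (Real.pi * x) ^ 2) ^ n : ℝ) : ℂ) := by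
      unfold PTJ
      rw [intervalIntegral.integral_of_le zero_le_one, ← integral_Icc_eq_integral_Ioc,
        ← integral_complex_ofReal]
      refine setIntegral_congr_fun measurableSet_Icc fun x hx => ?_
      simp only [PTf, zero_mul, Complex.exp_zero, mul_one]
      congr 1
      rw [← pow_mul]
      exact_mod_cast Real.rpow_natCast (Real.sin (Real.pi * x)) (2 * n)
    have e2 : PTJ (a + 2 * n) z
        = ∫ x in Set.Icc (0:ℝ) 1, (Real.sin (Real.pi * x) ^ 2) ^ n • PTf a z x := by
      unfold PTJ
      rw [intervalIntegral.integral_of_le zero_le_one, integral_Icc_eq_integral_Ioc,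
        integral_Ioc_eq_integral_Ioo, integral_Ioc_eq_integral_Ioo]
      refine setIntegral_congr_fun measurableSet_Ioo fun x hx => ?_
      have hs := PT_sin_pos hx.1 hx.2
      have : Real.sin (Real.pi * x) ^ (a + 2 * n)
          = (Real.sin (Real.pi * x) ^ 2) ^ n * Real.sin (Real.pi * x) ^ a := by
        rw [Real.rpow_add hs, mul_comm, ← pow_mul]
        congr 1
        exact_mod_cast Real.rpow_natCast (Real.sin (Real.pi * x)) (2 * n)
      simp only [PTf, this, Complex.real_smul]
      push_cast
      ring
    rw [e1, e2, Complex.real_smul, Complex.ofReal_inv, div_eq_inv_mul]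
  · rintro y ⟨hy0, hy1⟩ hy
    have hlt : Real.sin (Real.pi * y) < 1 := by
      refine lt_of_le_of_ne (Real.sin_le_one _) fun h => hy ?_
      have hc : Real.cos (Real.pi * y) = 0 := by
        nlinarith [Real.sin_sq_add_cos_sq (Real.pi * y)]
      have h2 : Real.pi * y = Real.pi / 2 := by
        apply Real.injOn_cos ⟨by positivity, by nlinarith [Real.pi_pos]⟩
          ⟨by positivity, by linarith [Real.pi_pos]⟩
        rw [hc, Real.cos_pi_div_two]
      have := Real.pi_pos
      field_simp at h2
      linarith
    have h0 : 0 ≤ Real.sin (Real.pi * y) :=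
      Real.sin_nonneg_of_nonneg_of_le_pi (by positivity) (by nlinarith [Real.pi_pos])
    change Real.sin (Real.pi * y) ^ 2 < Real.sin (Real.pi * (1/2)) ^ 2
    rw [hhalf]
    nlinarith
  · rw [interior_Icc, closure_Ioo (by norm_num)]
    constructor <;> norm_num
  · exact (intervalIntegrable_iff_integrableOn_Icc_of_le zero_le_one).1 (PT_int ha z)
  · apply ContinuousAt.continuousWithinAt
    unfold PTf
    have : ContinuousAt (fun x : ℝ => Real.sin (Real.pi * x) ^ a) (1/2) := by
      apply ContinuousAt.rpow_const
      · fun_prop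
      · left; rw [hhalf]; norm_num
    fun_prop

lemma PT_iter {a : ℝ} (ha : -1 < a) (z : ℂ) (n : ℕ) :
    (∏ k ∈ Finset.range n, ((a/2+1 : ℂ) + k)) * (∏ k ∈ Finset.range n, ((a/2+1-1/2 : ℂ) + k))
        * PTJ a z
      = (∏ k ∈ Finset.range n, ((a/2+1 + Complex.I * z / (2*Real.pi) : ℂ) + k))
        * (∏ k ∈ Finset.range n, ((a/2+1 - Complex.I * z / (2*Real.pi) : ℂ) + k))
        * PTJ (a + 2 * n) z := by
  induction n with
  | zero => simp
  | succ n ih =>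
    have hpi : (Real.pi:ℂ) ≠ 0 := by exact_mod_cast Real.pi_ne_zero
    have hr := PT_rec (show -1 < a + 2 * n by have : (0:ℝ) ≤ n := n.cast_nonneg
                                              linarith) z
    have e : a + 2 * n + 2 = a + 2 * ((n + 1 : ℕ) : ℝ) := by push_cast; ring
    rw [e] at hr
    simp only [Finset.prod_range_succ]
    have e2 : (a/2+1 + Complex.I * z / (2*Real.pi) + n : ℂ) * (a/2+1 - Complex.I * z / (2*Real.pi) + n)
        = (((a + 2 * n : ℝ) + 2 : ℂ)^2 + (z/Real.pi)^2) / 4 := by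
      push_cast
      field_simp
      ring_nf
      simp only [Complex.I_sq]
      ring
    have e3 : (a/2+1 + n : ℂ) * (a/2+1-1/2 + n) = ((a + 2 * n : ℝ) + 2 : ℂ) * ((a + 2 * n : ℝ) + 1) / 4 := by
      push_cast
      ring
    generalize (∏ k ∈ Finset.range n, ((a/2+1 + Complex.I * z / (2*Real.pi) : ℂ) + k)) = P1 at *
    generalize (∏ k ∈ Finset.range n, ((a/2+1 - Complex.I * z / (2*Real.pi) : ℂ) + k)) = P2 at *
    generalize (∏ k ∈ Finset.range n, ((a/2+1 : ℂ) + k)) = P3 at *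
    generalize (∏ k ∈ Finset.range n, ((a/2+1-1/2 : ℂ) + k)) = P4 at *
    calc _ = P3 * P4 * PTJ a z * ((a/2+1 + n : ℂ) * (a/2+1-1/2 + n)) := by ring
      _ = P1 * P2 * (((a + 2 * n : ℝ) + 2 : ℂ) * ((a + 2 * n : ℝ) + 1) * PTJ (a + 2 * n) z) / 4 := by
        rw [ih, e3]; ring
      _ = P1 * P2 * ((a/2+1 + Complex.I * z / (2*Real.pi) + n : ℂ)
          * (a/2+1 - Complex.I * z / (2*Real.pi) + n)) * PTJ (a + 2 * ((n+1 : ℕ):ℝ)) z := by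
        rw [hr, e2]; ring
      _ = _ := by ring

open Filter Topology in
lemma PT_inv (s : ℂ) :
    Tendsto (fun n => (Complex.GammaSeq s n)⁻¹) atTop (𝓝 (Complex.Gamma s)⁻¹) := by
  by_cases h : Complex.Gamma s = 0
  · obtain ⟨m, hm⟩ := (Complex.Gamma_eq_zero_iff s).1 h
    rw [h, inv_zero]
    refine tendsto_const_nhds.congr' ?_
    filter_upwards [eventually_ge_atTop m] with n hn
    have : ∏ j ∈ Finset.range (n + 1), (s + j) = 0 :=
      Finset.prod_eq_zero (i := m) (Finset.mem_range.2 (by omega)) (by rw [hm]; ring)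
    rw [Complex.GammaSeq, this]; simp
  · exact (Complex.GammaSeq_tendsto_Gamma s).inv₀ h

lemma PT_prod_ne {s : ℂ} (hs : 0 < s.re) (n : ℕ) : ∏ j ∈ Finset.range n, (s + j) ≠ 0 := by
  refine Finset.prod_ne_zero_iff.2 fun j _ h => ?_
  have := congrArg Complex.re h
  simp at this
  have : (0:ℝ) ≤ j := j.cast_nonneg
  linarith

lemma PT_seq {a : ℝ} (ha : -1 < a) (z : ℂ) (n : ℕ) (hn : n ≠ 0) :
    PTJ a z = Complex.GammaSeq (a/2+1) n * Complex.GammaSeq (a/2+1-1/2) n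
      * (Complex.GammaSeq (a/2+1 + Complex.I * z / (2*Real.pi)) n)⁻¹
      * (Complex.GammaSeq (a/2+1 - Complex.I * z / (2*Real.pi)) n)⁻¹
      * Complex.GammaSeq 1 n * (Complex.GammaSeq (1/2) n)⁻¹
      * (PTJ (a + 2 * ((n+1:ℕ):ℝ)) z / PTJ (2 * ((n+1:ℕ):ℝ)) 0) := by
  have h1 := PT_iter ha z (n+1)
  have h2 := PT_iter (show (-1:ℝ) < 0 by norm_num) 0 (n+1)
  have h3 : PTJ 0 0 = 1 := by simp [PTJ, PTf]
  rw [h3] at h2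
  have r1 : (0:ℝ) < ((a:ℂ)/2+1).re := by
    rw [show ((a:ℂ)/2+1) = ((a/2+1 : ℝ) : ℂ) by push_cast; ring, Complex.ofReal_re]; linarith
  have r2 : (0:ℝ) < ((a:ℂ)/2+1-1/2).re := by
    rw [show ((a:ℂ)/2+1-1/2) = ((a/2+1-1/2 : ℝ) : ℂ) by push_cast; ring, Complex.ofReal_re]; linarith
  have q1 := PT_prod_ne r1 (n+1)
  have q2 := PT_prod_ne r2 (n+1)
  have q3 := PT_prod_ne (s := 1) (by simp) (n+1)
  have q4 := PT_prod_ne (s := 1/2) (by norm_num) (n+1)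
  have i1 : ((0:ℝ):ℂ)/2+1 = 1 := by simp
  have i2 : (1:ℂ) - 1/2 = 1/2 := by norm_num
  have i3 : (1:ℂ) + Complex.I * 0 / (2*Real.pi) = 1 := by simp
  have i4 : (1:ℂ) - Complex.I * 0 / (2*Real.pi) = 1 := by simp
  rw [i1, i2, i3, i4, zero_add] at h2
  have hJ : PTJ (2 * ((n+1:ℕ):ℝ)) 0 ≠ 0 := by
    intro h
    rw [h] at h2
    simp only [mul_one, mul_zero] at h2
    exact mul_ne_zero q3 q4 h2
  have hn' : (n:ℂ) ≠ 0 := by exact_mod_cast hn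
  have hf : ((n.factorial : ℕ):ℂ) ≠ 0 := by exact_mod_cast n.factorial_ne_zero
  simp only [Complex.GammaSeq]
  have n1 : (n:ℂ) ^ ((a:ℂ)/2+1-1/2) = (n:ℂ)^((a:ℂ)/2+1) / (n:ℂ)^(1/2:ℂ) := Complex.cpow_sub _ _ hn'
  have n2 : (n:ℂ) ^ ((a:ℂ)/2+1+Complex.I * z / (2*Real.pi))
    = (n:ℂ)^((a:ℂ)/2+1) * (n:ℂ)^(Complex.I * z / (2*Real.pi)) := Complex.cpow_add _ _ hn'
  have n3 : (n:ℂ) ^ ((a:ℂ)/2+1-Complex.I * z / (2*Real.pi))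
    = (n:ℂ)^((a:ℂ)/2+1) / (n:ℂ)^(Complex.I * z / (2*Real.pi)) := Complex.cpow_sub _ _ hn'
  have n4 : (n:ℂ)^(1/2:ℂ) * (n:ℂ)^(1/2:ℂ) = n := by
    rw [← Complex.cpow_add _ _ hn']; norm_num
  have z1 : (n:ℂ)^((a:ℂ)/2+1) ≠ 0 := by simp [Complex.cpow_eq_zero_iff, hn']
  have z2 : (n:ℂ)^(1/2:ℂ) ≠ 0 := by simp [Complex.cpow_eq_zero_iff, hn']
  have z3 : (n:ℂ)^(Complex.I * z / (2*Real.pi)) ≠ 0 := by simp [Complex.cpow_eq_zero_iff, hn']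
  rw [n1, n2, n3, Complex.cpow_one]
  generalize (n:ℂ)^((a:ℂ)/2+1) = x1 at *
  generalize (n:ℂ)^(1/2:ℂ) = x2 at *
  generalize (n:ℂ)^(Complex.I * z / (2*Real.pi)) = x3 at *
  generalize PTJ (2 * ((n+1:ℕ):ℝ)) 0 = J2 at *
  generalize PTJ (a + 2 * ((n+1:ℕ):ℝ)) z = J1 at *
  generalize (∏ k ∈ Finset.range (n+1), ((a/2+1 + Complex.I * z / (2*Real.pi) : ℂ) + k)) = P1 at *
  generalize (∏ k ∈ Finset.range (n+1), ((a/2+1 - Complex.I * z / (2*Real.pi) : ℂ) + k)) = P2 at *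
  generalize (∏ k ∈ Finset.range (n+1), ((a/2+1 : ℂ) + k)) = P3 at *
  generalize (∏ k ∈ Finset.range (n+1), ((a/2+1-1/2 : ℂ) + k)) = P4 at *
  generalize (∏ k ∈ Finset.range (n+1), ((1 : ℂ) + k)) = P5 at *
  generalize (∏ k ∈ Finset.range (n+1), ((1/2 : ℂ) + k)) = P6 at *
  generalize ((n.factorial : ℕ):ℂ) = f at *
  have h4 : J2 = P6 / P5 := by
    field_simp
    apply mul_left_cancel₀ q3
    linear_combination -h2
  have h5 : PTJ a z = P1 * P2 * J1 / (P3 * P4) := by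
    field_simp
    linear_combination h1
  rw [h5, h4, ← n4]
  simp only [inv_div]
  field_simp

open Real Complex MeasureTheory intervalIntegral

theorem poschl_teller_sine_integral (δ : ℝ) (hδ : δ > -3/2) (z : ℂ) :
    ∫ x in (0:ℝ)..1, (((Real.sin (Real.pi * x)) ^ (2*δ+2) : ℝ) : ℂ) * Complex.exp (z * x)
      = Complex.Gamma (2*δ+3) * Complex.exp (z/2) /
        ((4:ℂ) ^ ((δ:ℂ)+1) * Complex.Gamma ((δ:ℂ)+2 + Complex.I * z / (2*Real.pi)) *
          Complex.Gamma ((δ:ℂ)+2 - Complex.I * z / (2*Real.pi))) := by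
  have ha : -1 < 2*δ+2 := by linarith
  change PTJ (2*δ+2) z = _
  have hp := (PT_peak ha z).comp (Filter.tendsto_add_atTop_nat 1)
  have hl := ((((((Complex.GammaSeq_tendsto_Gamma (((2*δ+2 : ℝ):ℂ)/2+1)).mul
    (Complex.GammaSeq_tendsto_Gamma (((2*δ+2 : ℝ):ℂ)/2+1-1/2))).mul
    (PT_inv (((2*δ+2 : ℝ):ℂ)/2+1 + Complex.I * z / (2*Real.pi)))).mul
    (PT_inv (((2*δ+2 : ℝ):ℂ)/2+1 - Complex.I * z / (2*Real.pi)))).mul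
    (Complex.GammaSeq_tendsto_Gamma 1)).mul (PT_inv (1/2))).mul hp
  have hc : Filter.Tendsto (fun _ : ℕ => PTJ (2*δ+2) z) Filter.atTop
      (nhds (PTJ (2*δ+2) z)) := tendsto_const_nhds
  have heq := tendsto_nhds_unique (hc.congr' (by
    filter_upwards [Filter.eventually_ne_atTop 0] with n hn
    exact PT_seq ha z n hn)) hl
  rw [heq]
  have b1 : (((2*δ+2 : ℝ):ℂ)/2+1) = (δ:ℂ)+2 := by push_cast; ring
  have hd := Complex.Gamma_mul_Gamma_add_half ((δ:ℂ)+2-1/2)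
  rw [show (δ:ℂ)+2-1/2+1/2 = δ+2 by ring, show 2*((δ:ℂ)+2-1/2) = 2*δ+3 by ring,
    show (1:ℂ) - (2*δ+3) = -(2*(δ+1)) by ring, Complex.cpow_neg, Complex.cpow_ofNat_mul] at hd
  have h4 : ((2:ℂ)^((δ:ℂ)+1))^2 = (4:ℂ)^((δ:ℂ)+1) := by
    have := Complex.natCast_mul_natCast_cpow 2 2 ((δ:ℂ)+1)
    norm_num at this
    rw [this]; ring
  have hg : Complex.Gamma (1/2) = ((√π : ℝ):ℂ) := by
    rw [← Real.Gamma_one_half_eq, ← Complex.Gamma_ofReal]; norm_num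
  have hsq : ((√π : ℝ):ℂ) ≠ 0 := by
    exact_mod_cast (Real.sqrt_pos.2 Real.pi_pos).ne'
  rw [b1, hg, Complex.Gamma_one, mul_comm (Complex.Gamma ((δ:ℂ)+2)), hd]
  rw [h4]
  generalize Complex.Gamma ((δ:ℂ)+2 + Complex.I * z / (2*Real.pi)) = G1
  generalize Complex.Gamma ((δ:ℂ)+2 - Complex.I * z / (2*Real.pi)) = G2
  field_simp
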